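/- arXiv:2304.04061 — 3 statements merged into one kernel-verified Lean document; each statement's English description precedes it below -/
import Mathlib

section
/- For every integer m ≥ 1, the following equalities of K-submodules of K[F₂] hold: (K·1 ⊕ K[F₂](X₁ − 1)) ∩ I^m = I^m ∩ K[F₂](X₁ − 1) = {v(X₁ − 1) : v ∈ I^{m−1}}, where I⁰ = K[F₂]. -/
noncomputable section

/-- The free group on two generators. -/
abbrev F2 : Type := FreeGroup (Fin 2)

/-- The first generator `X₀` of `F₂`. -/
def X0 : F2 := FreeGroup.of 0

/-- The second generator `X₁` of `F₂`. -/
def X1 : F2 := FreeGroup.of 1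

/-- The unit `e^{2πi/N}` of `ℂ`. -/
def zetaN (N : ℕ) : ℂˣ :=
  Units.mk0 (Complex.exp (2 * Real.pi * Complex.I / N)) (Complex.exp_ne_zero _)

/-- The group `μ_N` of `N`-th roots of unity in `ℂˣ`. -/
def muN (N : ℕ) : Subgroup ℂˣ := rootsOfUnity N ℂ

lemma zetaN_mem (N : ℕ) : zetaN N ∈ muN N := by
  rcases Nat.eq_zero_or_pos N with h | h
  · subst h; simp [muN, mem_rootsOfUnity]
  · rw [muN, mem_rootsOfUnity]
    have hcast : (N : ℂ) ≠ 0 := Nat.cast_ne_zero.mpr h.ne'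
    have : (zetaN N : ℂ) ^ N = 1 := by
      rw [zetaN, Units.val_mk0, ← Complex.exp_nat_mul, mul_div_cancel₀ _ hcast]
      exact Complex.exp_two_pi_mul_I
    exact Units.ext (by simpa using this)

/-- The morphism `π : F₂ → μ_N` determined by `π(X₀) = e^{2πi/N}` and `π(X₁) = 1`. -/
def piN (N : ℕ) : F2 →* (muN N) :=
  FreeGroup.lift (fun i => if i = 0 then ⟨zetaN N, zetaN_mem N⟩ else 1)

/-- The subgroup `H := ker π` of `F₂`. -/
def Hgrp (N : ℕ) : Subgroup F2 := (piN N).ker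

/-- The two-sided ideal `I = ker(K[F₂] → K[μ_N])`, as a `K`-submodule of `K[F₂]`. -/
def Isub (K : Type*) [CommRing K] (N : ℕ) : Submodule K (MonoidAlgebra K F2) :=
  (RingHom.ker (MonoidAlgebra.mapDomainRingHom K (piN N))).restrictScalars K

/-- Powers of the ideal `I`, with the convention `I⁰ = K[F₂]`. -/
def Ipow (K : Type*) [CommRing K] (N : ℕ) : ℕ → Submodule K (MonoidAlgebra K F2)
  | 0 => ⊤
  | (m + 1) => Isub K N * Ipow K N m

/-- The `K`-submodule `K[F₂](g − 1) = {v (g − 1) : v ∈ K[F₂]}` of `K[F₂]`. -/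
def Rsub (K : Type*) [CommRing K] (g : F2) : Submodule K (MonoidAlgebra K F2) :=
  LinearMap.range (LinearMap.mulRight K (MonoidAlgebra.of K F2 g - 1))

/-- The `K`-submodule `W = K·1 ⊕ K[F₂](X₁ − 1)` of `K[F₂]`. -/
def Wsub (K : Type*) [CommRing K] : Submodule K (MonoidAlgebra K F2) :=
  Submodule.span K {1} ⊔ Rsub K X1

/-!
Let `ε` be the augmentation of `K[F]`, where `F` is free on `α`. Fox calculus provides a linear map
`D : K[F] → K[F]` with `D (a b) = a D(b) + ε(b) D(a)` and `D x = 1` for every generator `x`. Hence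
`v ↦ v (x - 1)` has `D` as a left inverse, and `D` maps `I ^ (n + 1) = I ^ n * I` into `I ^ n`
whenever `I` lies in the augmentation ideal: so `v (x - 1) ∈ I ^ (n + 1)` forces `v ∈ I ^ n`.
The summand `K · 1` does not contribute to the intersection because `ε` is injective on it and
vanishes on the rest.
-/

section AugmentedAlgebra

variable {K A : Type*} [CommRing K] [Ring A] [Algebra K A]

lemma disjoint_span_one_ker (ε : A →ₐ[K] K) :
    Disjoint (Submodule.span K {1}) (LinearMap.ker ε.toLinearMap) := by
  rw [Submodule.disjoint_def]
  intro a h_span h_ker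
  obtain ⟨k, rfl⟩ := Submodule.mem_span_singleton.mp h_span
  have hk : k = 0 := by simpa using h_ker
  rw [hk, zero_smul]

lemma span_one_sup_inf_eq {ε : A →ₐ[K] K} {P Q : Submodule K A}
    (hP : P ≤ LinearMap.ker ε.toLinearMap) (hQ : Q ≤ LinearMap.ker ε.toLinearMap) :
    (Submodule.span K {1} ⊔ P) ⊓ Q = Q ⊓ P := by
  have h_modular : (Submodule.span K {1} ⊔ P) ⊓ LinearMap.ker ε.toLinearMap = P := by
    rw [sup_comm, sup_inf_assoc_of_le _ hP, (disjoint_span_one_ker ε).eq_bot, sup_bot_eq]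
  calc (Submodule.span K {1} ⊔ P) ⊓ Q
      = (Submodule.span K {1} ⊔ P) ⊓ LinearMap.ker ε.toLinearMap ⊓ Q := by
        rw [inf_assoc, inf_eq_right.mpr hQ]
    _ = Q ⊓ P := by rw [h_modular, inf_comm]

/-- The Fox product rule for a `K`-linear endomorphism `D` of a `K`-algebra augmented by `ε`:
`D` is a derivation into `A`, on which `A` acts by multiplication on the left and through `ε` on
the right. -/
def IsFoxDerivation (ε : A →ₐ[K] K) (D : A →ₗ[K] A) : Prop :=
  ∀ a b, D (a * b) = a * D b + ε b • D a

namespace IsFoxDerivation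

variable {ε : A →ₐ[K] K} {D : A →ₗ[K] A} {I : Ideal A} {a b v x : A}

lemma map_one_eq_zero (hD : IsFoxDerivation ε D) : D 1 = 0 := by
  simpa using hD 1 1

lemma map_mul_of_mem_ker (hD : IsFoxDerivation ε D) (hb : b ∈ RingHom.ker ε) :
    D (a * b) = a * D b := by
  rw [hD, (RingHom.mem_ker).mp hb, zero_smul, add_zero]

lemma map_mem_pow (hD : IsFoxDerivation ε D) [I.IsTwoSided] (hI : I ≤ RingHom.ker ε) {n : ℕ}
    (ha : a ∈ I ^ (n + 1)) : D a ∈ I ^ n := by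
  rw [Submodule.pow_succ] at ha
  induction ha using Submodule.mul_induction_on' with
  | mem_mul_mem x hx y hy =>
    rw [hD.map_mul_of_mem_ker (hI hy)]
    exact (I ^ n).mul_mem_right _ hx
  | add x _ y _ hx hy =>
    rw [map_add]
    exact add_mem hx hy

lemma mul_mem_pow_succ_iff (hD : IsFoxDerivation ε D) [I.IsTwoSided] (hI : I ≤ RingHom.ker ε)
    (hx : x ∈ I) (hDx : D x = 1) {n : ℕ} : v * x ∈ I ^ (n + 1) ↔ v ∈ I ^ n := by
  constructor
  · intro h
    simpa [hD.map_mul_of_mem_ker (hI hx), hDx] using hD.map_mem_pow hI h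
  · intro hv
    rw [Submodule.pow_succ]
    exact Ideal.mul_mem_mul hv hx

lemma pow_succ_inf_range_mulRight (hD : IsFoxDerivation ε D) [I.IsTwoSided]
    (hI : I ≤ RingHom.ker ε) (hx : x ∈ I) (hDx : D x = 1) (n : ℕ) :
    (I ^ (n + 1)).restrictScalars K ⊓ LinearMap.range (LinearMap.mulRight K x) =
      ((I ^ n).restrictScalars K).map (LinearMap.mulRight K x) := by
  have h_comap : ((I ^ (n + 1)).restrictScalars K).comap (LinearMap.mulRight K x) =
      (I ^ n).restrictScalars K :=
    Submodule.ext fun v => hD.mul_mem_pow_succ_iff hI hx hDx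
  rw [← h_comap, Submodule.map_comap_eq, inf_comm]

end IsFoxDerivation

end AugmentedAlgebra

section MonoidAlgebra

variable (K : Type*) [CommRing K] {G H : Type*} [Monoid G] [Monoid H]

/-- The augmentation `K[G] → K` of a monoid algebra, sending every element of `G` to `1`. -/
def augmentation (G : Type*) [Monoid G] : MonoidAlgebra K G →ₐ[K] K :=
  MonoidAlgebra.lift K K G 1

@[simp]
lemma augmentation_of (g : G) : augmentation K G (MonoidAlgebra.of K G g) = 1 := by
  simp [augmentation]

lemma augmentation_mapDomain (f : G →* H) (a : MonoidAlgebra K G) :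
    augmentation K H (MonoidAlgebra.mapDomainRingHom K f a) = augmentation K G a := by
  have h_comp : (augmentation K H).comp (MonoidAlgebra.mapDomainAlgHom K K f) =
      augmentation K G := by
    ext g
    simp [augmentation]
  exact DFunLike.congr_fun h_comp a

lemma ker_mapDomain_le_ker_augmentation (f : G →* H) :
    RingHom.ker (MonoidAlgebra.mapDomainRingHom K f) ≤ RingHom.ker (augmentation K G) := by
  intro a ha
  rw [RingHom.mem_ker, ← augmentation_mapDomain K f, (RingHom.mem_ker).mp ha, map_zero]

lemma of_sub_one_mem_ker_mapDomain {f : G →* H} {g : G} (hg : f g = 1) :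
    MonoidAlgebra.of K G g - 1 ∈ RingHom.ker (MonoidAlgebra.mapDomainRingHom K f) := by
  rw [RingHom.mem_ker, map_sub, map_one]
  simp [hg, MonoidAlgebra.one_def]

end MonoidAlgebra

section FoxCalculus

variable {K : Type*} [CommRing K] {α : Type*}

/-- The matrix `!![g, b; 0, 1]` of the affine map `x ↦ g x + b`, as a unit, so that it can serve as
the image of a generator of a free group. -/
def affineUnit {G : Type*} [Group G] (g : G) (b : MonoidAlgebra K G) :
    (Matrix (Fin 2) (Fin 2) (MonoidAlgebra K G))ˣ where
  val := !![MonoidAlgebra.of K G g, b; 0, 1]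
  inv := !![MonoidAlgebra.of K G g⁻¹, -(MonoidAlgebra.of K G g⁻¹ * b); 0, 1]
  val_inv := by
    rw [Matrix.mul_fin_two, Matrix.one_fin_two, mul_neg, ← mul_assoc, ← map_mul, mul_inv_cancel,
      map_one]
    simp
  inv_val := by
    rw [Matrix.mul_fin_two, Matrix.one_fin_two, ← map_mul, inv_mul_cancel, map_one]
    simp

/-- The Magnus representation of the group algebra of a free group, extending
`x ↦ !![x, d x; 0, 1]` on generators. -/
def magnusRep (d : α → MonoidAlgebra K (FreeGroup α)) :
    MonoidAlgebra K (FreeGroup α) →ₐ[K] Matrix (Fin 2) (Fin 2) (MonoidAlgebra K (FreeGroup α)) :=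
  MonoidAlgebra.lift K _ _
    ((Units.coeHom _).comp (FreeGroup.lift fun i => affineUnit (FreeGroup.of i) (d i)))

/-- The Fox derivation with prescribed values `d` on the generators, read off as the upper right
entry of the Magnus representation. -/
def foxDerivation (d : α → MonoidAlgebra K (FreeGroup α)) :
    MonoidAlgebra K (FreeGroup α) →ₗ[K] MonoidAlgebra K (FreeGroup α) :=
  Matrix.entryLinearMap K _ 0 1 ∘ₗ (magnusRep d).toLinearMap

variable (d : α → MonoidAlgebra K (FreeGroup α))

lemma foxDerivation_of (i : α) :
    foxDerivation d (MonoidAlgebra.of K _ (FreeGroup.of i)) = d i := by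
  simp [foxDerivation, magnusRep, affineUnit]

lemma exists_magnusRep_of_eq (g : FreeGroup α) :
    ∃ b, magnusRep d (MonoidAlgebra.of K _ g) = !![MonoidAlgebra.of K _ g, b; 0, 1] := by
  induction g using FreeGroup.induction_on with
  | C1 => exact ⟨0, by rw [map_one, map_one, Matrix.one_fin_two]⟩
  | of i => exact ⟨d i, by simp [magnusRep, affineUnit]⟩
  | inv_of i _ =>
    refine ⟨(affineUnit (FreeGroup.of i) (d i))⁻¹.val 0 1, ?_⟩
    rw [magnusRep, MonoidAlgebra.lift_of, MonoidHom.comp_apply, map_inv, FreeGroup.lift_apply_of]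
    rfl
  | mul g h hg hh =>
    obtain ⟨b, hb⟩ := hg
    obtain ⟨c, hc⟩ := hh
    refine ⟨MonoidAlgebra.of K _ g * c + b, ?_⟩
    rw [map_mul, map_mul, hb, hc, Matrix.mul_fin_two]
    simp

lemma magnusRep_of (g : FreeGroup α) :
    magnusRep d (MonoidAlgebra.of K _ g) =
      !![MonoidAlgebra.of K _ g, foxDerivation d (MonoidAlgebra.of K _ g); 0, 1] := by
  obtain ⟨b, hb⟩ := exists_magnusRep_of_eq d g
  have h_entry : foxDerivation d (MonoidAlgebra.of K _ g) = b := congrFun₂ hb 0 1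
  rw [h_entry, hb]

lemma magnusRep_apply (a : MonoidAlgebra K (FreeGroup α)) :
    magnusRep d a =
      !![a, foxDerivation d a; 0, algebraMap K _ (augmentation K _ a)] := by
  induction a using MonoidAlgebra.induction_on with
  | of g => simp only [magnusRep_of, augmentation_of, map_one]
  | add a b ha hb =>
    simp only [map_add, ha, hb]
    simp
  | smul k a ha =>
    simp only [map_smul, ha]
    simp

lemma isFoxDerivation_foxDerivation : IsFoxDerivation (augmentation K _) (foxDerivation d) := by
  intro a b
  have h_mul := congrFun₂ (map_mul (magnusRep d) a b) 0 1
  simp only [magnusRep_apply, Matrix.mul_fin_two] at h_mul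
  rw [Algebra.smul_def, Algebra.commutes]
  simpa using h_mul

end FoxCalculus

lemma piN_X1 (N : ℕ) : piN N X1 = 1 := by
  simp [piN, X1]

lemma Ipow_eq_restrictScalars_pow (K : Type*) [CommRing K] (N m : ℕ) :
    Ipow K N m =
      (RingHom.ker (MonoidAlgebra.mapDomainRingHom K (piN N)) ^ m).restrictScalars K := by
  induction m with
  | zero => rw [Submodule.pow_zero, Ideal.one_eq_top]; rfl
  | succ m ih => rw [Ipow, ih, Ideal.IsTwoSided.pow_succ, Submodule.restrictScalars_mul]; rfl

theorem statement4_general (K : Type*) [CommRing K] {α : Type*} (i : α)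
    (I : Ideal (MonoidAlgebra K (FreeGroup α))) [I.IsTwoSided]
    (hI : I ≤ RingHom.ker (augmentation K (FreeGroup α)))
    (hi : MonoidAlgebra.of K (FreeGroup α) (FreeGroup.of i) - 1 ∈ I) (n : ℕ) :
    (Submodule.span K {1} ⊔ LinearMap.range
          (LinearMap.mulRight K (MonoidAlgebra.of K (FreeGroup α) (FreeGroup.of i) - 1))) ⊓
        (I ^ (n + 1)).restrictScalars K =
      (I ^ (n + 1)).restrictScalars K ⊓ LinearMap.range
        (LinearMap.mulRight K (MonoidAlgebra.of K (FreeGroup α) (FreeGroup.of i) - 1)) ∧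
    (I ^ (n + 1)).restrictScalars K ⊓ LinearMap.range
        (LinearMap.mulRight K (MonoidAlgebra.of K (FreeGroup α) (FreeGroup.of i) - 1)) =
      ((I ^ n).restrictScalars K).map
        (LinearMap.mulRight K (MonoidAlgebra.of K (FreeGroup α) (FreeGroup.of i) - 1)) := by
  have hD := isFoxDerivation_foxDerivation (K := K) (fun _ : α => 1)
  have hD_generator : foxDerivation (fun _ : α => 1)
      (MonoidAlgebra.of K (FreeGroup α) (FreeGroup.of i) - 1) = 1 := by
    rw [map_sub, foxDerivation_of, hD.map_one_eq_zero, sub_zero]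
  refine ⟨span_one_sup_inf_eq (ε := augmentation K (FreeGroup α)) ?_ ?_,
    hD.pow_succ_inf_range_mulRight hI hi hD_generator n⟩
  · rintro _ ⟨v, rfl⟩
    exact hI (I.mul_mem_left v hi)
  · exact fun a ha => hI (Ideal.pow_le_self n.succ_ne_zero ha)

/-- For `m ≥ 1`:
`(K·1 ⊕ K[F₂](X₁ − 1)) ∩ I^m = I^m ∩ K[F₂](X₁ − 1) = {v (X₁ − 1) : v ∈ I^{m−1}}`. -/
theorem statement4 (K : Type*) [CommRing K] [Algebra ℚ K] (N : ℕ) (hN : 0 < N)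
    (m : ℕ) (hm : 1 ≤ m) :
    Wsub K ⊓ Ipow K N m = Ipow K N m ⊓ Rsub K X1 ∧
    Ipow K N m ⊓ Rsub K X1 =
      Submodule.map (LinearMap.mulRight K (MonoidAlgebra.of K F2 X1 - 1))
        (Ipow K N (m - 1)) := by
  obtain ⟨n, rfl⟩ := Nat.exists_eq_add_of_le' hm
  rw [Nat.add_sub_cancel, Ipow_eq_restrictScalars_pow, Ipow_eq_restrictScalars_pow]
  exact statement4_general K 1 _ (ker_mapDomain_le_ker_augmentation K (piN N))
    (of_sub_one_mem_ker_mapDomain K (piN_X1 N)) n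
end
end

section
/- The canonical projection K[F₂] → K[F₂]/K[F₂](X₀ − 1) restricts to a K-module isomorphism from the K-submodule W := K·1 ⊕ K[F₂](X₁ − 1) onto the quotient K[F₂]/K[F₂](X₀ − 1). -/
noncomputable section

/-!
Let `F` be the free group on `α`. A 1-cocycle on `F` is the same as a section of the corresponding
semidirect product, so it can be prescribed arbitrarily on the generators. Consequently a `K`-linear
map out of `K[F]` can be prescribed arbitrarily at `1` and `K[F]`-linearly on the left ideals
`K[F](xᵢ - 1)`. For `s ⊆ α`, the map `K[F] → K[F]` that fixes `1` and `xᵢ - 1` for `i ∈ s` and kills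
`xᵢ - 1` for `i ∉ s` is a projection which separates `K·1 ⊕ ∑_{i ∈ s} K[F](xᵢ - 1)` from
`∑_{i ∉ s} K[F](xᵢ - 1)`. These two submodules span `K[F]` because the elements `g` with
`g - 1` in a given left ideal form a subgroup.
-/

open MonoidAlgebra groupCohomology

theorem bijective_mkQ_comp_subtype_of_isCompl {R M : Type*} [Ring R] [AddCommGroup M] [Module R M]
    {p q : Submodule R M} (h : IsCompl p q) : Function.Bijective (q.mkQ ∘ₗ p.subtype) :=
  (Submodule.quotientEquivOfIsCompl q p h.symm).symm.bijective

theorem exists_isCocycle₁_freeGroup {α A : Type*} [AddCommGroup A]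
    [DistribMulAction (FreeGroup α) A] (f : α → A) :
    ∃ d : FreeGroup α → A, IsCocycle₁ d ∧ ∀ i, d (FreeGroup.of i) = f i := by
  let φ : FreeGroup α →* MulAut (Multiplicative A) :=
    (MulAutMultiplicative A).symm.toMonoidHom.comp (DistribMulAction.toAddAut (FreeGroup α) A)
  let σ : FreeGroup α →* Multiplicative A ⋊[φ] FreeGroup α :=
    FreeGroup.lift fun i ↦ ⟨.ofAdd (f i), FreeGroup.of i⟩
  have right_σ (g : FreeGroup α) : (σ g).right = g := by
    have : SemidirectProduct.rightHom.comp σ = MonoidHom.id _ := by ext i; simp [σ]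
    exact DFunLike.congr_fun this g
  refine ⟨fun g ↦ (σ g).left.toAdd, fun g h ↦ ?_, fun i ↦ by simp [σ]⟩
  dsimp only
  rw [map_mul, SemidirectProduct.mul_left, right_σ, toAdd_mul, add_comm]
  rfl

section GroupAlgebra

variable (K : Type*) [CommRing K] {G : Type*}

section Monoid

variable [Monoid G]

/-- The left ideal `∑_{g ∈ S} K[G](g - 1)` of `K[G]`, for a set `S` of elements of the monoid `G`.
For `S = {g}` in `F₂` its underlying `K`-module is `Rsub K g`. -/
def subOneIdeal (S : Set G) : Ideal (MonoidAlgebra K G) :=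
  Ideal.span ((fun g ↦ of K G g - 1) '' S)

variable {K} {S : Set G}

theorem restrictScalars_subOneIdeal_le_iff {N : Submodule K (MonoidAlgebra K G)} :
    (subOneIdeal K S).restrictScalars K ≤ N ↔ ∀ g ∈ S, ∀ v, v * (of K G g - 1) ∈ N := by
  refine ⟨fun h g hg v ↦ h (Ideal.mul_mem_left _ v (Ideal.subset_span ⟨g, hg, rfl⟩)),
    fun h x hx ↦ ?_⟩
  induction (hx : x ∈ subOneIdeal K S) using Submodule.closure_induction with
  | zero => exact N.zero_mem
  | add x y _ _ ihx ihy => exact N.add_mem ihx ihy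
  | smul_mem v x hx =>
    obtain ⟨g, hg, rfl⟩ := hx
    exact h g hg v

theorem subOneIdeal_union (S T : Set G) :
    subOneIdeal K (S ∪ T) = subOneIdeal K S ⊔ subOneIdeal K T := by
  rw [subOneIdeal, Set.image_union, Ideal.span_union, subOneIdeal, subOneIdeal]

variable {M : Type*} [AddCommGroup M] [Module K M] [Module (MonoidAlgebra K G) M]
  [IsScalarTower K (MonoidAlgebra K G) M]

theorem exists_linearMap_mul_of_sub_one {d : G → M}
    (hd : ∀ g h, d (g * h) = of K G g • d h + d g) (m : M) :
    ∃ D : MonoidAlgebra K G →ₗ[K] M, D 1 = m ∧ ∀ v g, D (v * (of K G g - 1)) = v • d g := by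
  let D : MonoidAlgebra K G →ₗ[K] M := (MonoidAlgebra.basis G K).constr K fun g ↦ d g + m
  have D_of (g : G) : D (of K G g) = d g + m := (MonoidAlgebra.basis G K).constr_basis K _ g
  have d_one : d 1 = 0 := by simpa only [mul_one, map_one, one_smul, right_eq_add] using hd 1 1
  refine ⟨D, by rw [← map_one (of K G), D_of, d_one, zero_add], fun v g ↦ ?_⟩
  induction v using MonoidAlgebra.induction_on with
  | of h => rw [mul_sub, ← map_mul, mul_one, map_sub, D_of, D_of, hd]; abel
  | add v w ihv ihw => rw [add_mul, map_add, ihv, ihw, add_smul]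
  | smul c v ihv => rw [smul_mul_assoc, map_smul, ihv, smul_assoc]

end Monoid

section Group

variable {K} [Group G] {S : Set G}

theorem of_sub_one_mem_subOneIdeal {g : G} (hg : g ∈ Subgroup.closure S) :
    of K G g - 1 ∈ subOneIdeal K S := by
  induction hg using Subgroup.closure_induction with
  | mem g hg => exact Ideal.subset_span ⟨g, hg, rfl⟩
  | one => simp only [map_one, sub_self, zero_mem]
  | mul g h _ _ ihg ihh =>
    have : of K G (g * h) - 1 = of K G g * (of K G h - 1) + (of K G g - 1) := by
      rw [map_mul]; noncomm_ring
    exact this ▸ add_mem (Ideal.mul_mem_left _ _ ihh) ihg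
  | inv g _ ihg =>
    have : of K G g⁻¹ - 1 = -(of K G g⁻¹ * (of K G g - 1)) := by
      rw [mul_sub, ← map_mul, inv_mul_cancel, map_one, mul_one, neg_sub]
    exact this ▸ neg_mem (Ideal.mul_mem_left _ _ ihg)

theorem span_one_sup_subOneIdeal_eq_top (hS : Subgroup.closure S = ⊤) :
    Submodule.span K {1} ⊔ (subOneIdeal K S).restrictScalars K = ⊤ := by
  refine eq_top_iff.2 fun v _ ↦ ?_
  induction v using MonoidAlgebra.induction_on with
  | of g =>
    rw [← add_sub_cancel 1 (of K G g)]
    exact Submodule.add_mem_sup (Submodule.mem_span_singleton_self 1)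
      (of_sub_one_mem_subOneIdeal (hS ▸ Subgroup.mem_top g))
  | add v w ihv ihw => exact add_mem (ihv trivial) (ihw trivial)
  | smul c v ihv => exact Submodule.smul_mem _ c (ihv trivial)

end Group

end GroupAlgebra

section FreeGroup

variable (K : Type*) [CommRing K] {α : Type*}

variable {K} in
theorem exists_linearMap_mul_generator_sub_one {M : Type*} [AddCommGroup M] [Module K M]
    [Module (MonoidAlgebra K (FreeGroup α)) M] [IsScalarTower K (MonoidAlgebra K (FreeGroup α)) M]
    (m : M) (f : α → M) :
    ∃ D : MonoidAlgebra K (FreeGroup α) →ₗ[K] M,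
      D 1 = m ∧ ∀ v i, D (v * (of K _ (FreeGroup.of i) - 1)) = v • f i := by
  let _ : DistribMulAction (FreeGroup α) M := DistribMulAction.compHom M (of K (FreeGroup α))
  obtain ⟨d, hd, d_of⟩ := exists_isCocycle₁_freeGroup f
  obtain ⟨D, D_one, hD⟩ := exists_linearMap_mul_of_sub_one (K := K) hd m
  exact ⟨D, D_one, fun v i ↦ by rw [hD, d_of]⟩

theorem disjoint_span_one_sup_subOneIdeal (s : Set α) :
    Disjoint (Submodule.span K {1} ⊔ (subOneIdeal K (FreeGroup.of '' s)).restrictScalars K)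
      ((subOneIdeal K (FreeGroup.of '' sᶜ)).restrictScalars K) := by
  classical
  obtain ⟨P, P_one, hP⟩ := exists_linearMap_mul_generator_sub_one (K := K) 1
    fun i ↦ if i ∈ s then of K (FreeGroup α) (FreeGroup.of i) - 1 else 0
  have P_fixes : Submodule.span K {1} ⊔ (subOneIdeal K (FreeGroup.of '' s)).restrictScalars K ≤
      LinearMap.eqLocus P LinearMap.id := by
    refine sup_le (by simpa using P_one) (restrictScalars_subOneIdeal_le_iff.2 ?_)
    rintro _ ⟨i, hi, rfl⟩ v
    simp only [LinearMap.mem_eqLocus, hP, if_pos hi, smul_eq_mul, LinearMap.id_apply]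
  have P_kills : (subOneIdeal K (FreeGroup.of '' sᶜ)).restrictScalars K ≤ LinearMap.ker P := by
    refine restrictScalars_subOneIdeal_le_iff.2 ?_
    rintro _ ⟨i, hi, rfl⟩ v
    rw [LinearMap.mem_ker, hP, if_neg hi, smul_zero]
  exact Submodule.disjoint_def.2 fun x hx hx' ↦ (P_fixes hx).symm.trans (P_kills hx')

theorem codisjoint_span_one_sup_subOneIdeal (s : Set α) :
    Codisjoint (Submodule.span K {1} ⊔ (subOneIdeal K (FreeGroup.of '' s)).restrictScalars K)
      ((subOneIdeal K (FreeGroup.of '' sᶜ)).restrictScalars K) := by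
  rw [codisjoint_iff, sup_assoc, ← Submodule.restrictScalars_sup, ← subOneIdeal_union,
    ← Set.image_union, Set.union_compl_self, Set.image_univ]
  exact span_one_sup_subOneIdeal_eq_top (FreeGroup.closure_range_of α)

theorem statement6_general (s : Set α) :
    Function.Bijective (((subOneIdeal K (FreeGroup.of '' sᶜ)).restrictScalars K).mkQ ∘ₗ
      (Submodule.span K {1} ⊔ (subOneIdeal K (FreeGroup.of '' s)).restrictScalars K).subtype) :=
  bijective_mkQ_comp_subtype_of_isCompl
    ⟨disjoint_span_one_sup_subOneIdeal K s, codisjoint_span_one_sup_subOneIdeal K s⟩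

end FreeGroup

section TwoGenerators

variable (K : Type*) [CommRing K]

theorem Rsub_eq_subOneIdeal (g : F2) : Rsub K g = (subOneIdeal K {g}).restrictScalars K := by
  ext x
  simp [Rsub, subOneIdeal, Ideal.mem_span_singleton']

theorem Rsub_X0_eq_subOneIdeal_compl :
    Rsub K X0 = (subOneIdeal K (FreeGroup.of '' {1}ᶜ)).restrictScalars K := by
  have compl_one : ({1}ᶜ : Set (Fin 2)) = {0} := by ext i; fin_cases i <;> simp
  rw [compl_one, Set.image_singleton, Rsub_eq_subOneIdeal, X0]

theorem Wsub_eq_span_one_sup_subOneIdeal :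
    Wsub K = Submodule.span K {1} ⊔ (subOneIdeal K (FreeGroup.of '' {1})).restrictScalars K := by
  rw [Set.image_singleton, Wsub, Rsub_eq_subOneIdeal, X1]

end TwoGenerators

/-- The canonical projection `K[F₂] → K[F₂]/K[F₂](X₀ − 1)` restricts to a `K`-module
isomorphism from `W = K·1 ⊕ K[F₂](X₁ − 1)` onto the quotient. -/
theorem statement6 (K : Type*) [CommRing K] [Algebra ℚ K] :
    Function.Bijective ((Rsub K X0).mkQ ∘ₗ (Wsub K).subtype) := by
  rw [Wsub_eq_span_one_sup_subOneIdeal, Rsub_X0_eq_subOneIdeal_compl]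
  exact statement6_general K {1}
end
end

section
/- Let V be a K-module, u a K-linear endomorphism of V, and N ≥ 1 an integer. Let f : V^N → V^N be the K-linear endomorphism given by f(v₀, …, v_{N−1}) = (u(v_{N−1}) − v₀, v₀ − v₁, v₁ − v₂, …, v_{N−2} − v_{N−1}). Then the cokernel of f is isomorphic as a K-module to the cokernel of u − id; more precisely, the map V^N → V, (v₀, …, v_{N−1}) ↦ v₀ + ⋯ + v_{N−1}, sends the image of f into the image of u − id and induces a K-module isomorphism V^N/Im(f) → V/Im(u − id). -/
noncomputable section

/-!
Write `f = T - id`, where `T v = (u (v_{N-1}), v₀, …, v_{N-2})`. Applying `T` removes `v_{N-1}` from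
the coordinate sum and adds `u (v_{N-1})`, so the coordinates of `f v` sum to `(u - id) (v_{N-1})`.
Conversely, if the coordinates of `w` sum to `u x - x`, then `v_i = u x - (w₀ + ⋯ + w_i)` ends in
`v_{N-1} = x` and satisfies `f v = w`. Hence `Im f` is the full preimage of `Im (u - id)` under the
surjective summation map.
-/

section QuotientByPreimage

variable {R M M₂ : Type*} [Ring R] [AddCommGroup M] [Module R M] [AddCommGroup M₂] [Module R M₂]
  {q : Submodule R M} {p : Submodule R M₂} {g : M →ₗ[R] M₂}

/-- The isomorphism `M ⧸ g⁻¹(p) ≃ M₂ ⧸ p` induced by a surjective linear map `g`. The preimage is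
a variable `q` with an equation, so that quotients by submodules presented differently qualify. -/
def quotEquivOfEqComap (hq : q = p.comap g) (hg : Function.Surjective g) : (M ⧸ q) ≃ₗ[R] M₂ ⧸ p :=
  (Submodule.quotEquivOfEq q (p.mkQ ∘ₗ g).ker (by rw [LinearMap.ker_comp, p.ker_mkQ, hq])).trans
    ((p.mkQ ∘ₗ g).quotKerEquivOfSurjective (p.mkQ_surjective.comp hg))

theorem quotEquivOfEqComap_mk (hq : q = p.comap g) (hg : Function.Surjective g) (x : M) :
    quotEquivOfEqComap hq hg (Submodule.Quotient.mk x) = Submodule.Quotient.mk (g x) :=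
  rfl

end QuotientByPreimage

section CoordSum

variable (R M ι : Type*) [Semiring R] [AddCommMonoid M] [Module R M] [Fintype ι]

/-- The summation map `M^ι → M`, `v ↦ ∑ i, v i`, as a linear map. -/
def coordSum : (ι → M) →ₗ[R] M :=
  ∑ i, LinearMap.proj i

theorem coordSum_apply (v : ι → M) : coordSum R M ι v = ∑ i, v i := by
  simp [coordSum]

theorem coordSum_surjective [Nonempty ι] : Function.Surjective (coordSum R M ι) := by
  classical
  exact fun x ↦ ⟨Pi.single (Classical.arbitrary ι) x, by simp [coordSum_apply]⟩

end CoordSum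

theorem partialSum_last {M : Type*} [AddCommMonoid M] {n : ℕ} (w : Fin n → M) :
    Fin.partialSum w (Fin.last n) = ∑ i, w i := by
  rw [Fin.partialSum, Fin.val_last, List.take_of_length_le List.length_ofFn.le, List.sum_ofFn]

section TwistedShift

/-- The cyclic shift of `M^{n+1}` twisted by `u`:
`(v₀, …, vₙ) ↦ (u vₙ, v₀, …, v_{n-1})`. The map `f` of the theorem is `twistedShift n u - id`, with
`N = n + 1`. -/
def twistedShift {R M : Type*} [Semiring R] [AddCommMonoid M] [Module R M] (n : ℕ)
    (u : M →ₗ[R] M) : (Fin (n + 1) → M) →ₗ[R] (Fin (n + 1) → M) :=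
  LinearMap.vecCons (u ∘ₗ LinearMap.proj (Fin.last n)) (LinearMap.funLeft R M Fin.castSucc)

variable {R M : Type*} [Semiring R] [AddCommMonoid M] [Module R M] {n : ℕ} (u : M →ₗ[R] M)
  (v : Fin (n + 1) → M)

theorem twistedShift_apply_zero : twistedShift n u v 0 = u (v (Fin.last n)) :=
  rfl

theorem twistedShift_apply_succ (i : Fin n) : twistedShift n u v i.succ = v i.castSucc :=
  rfl

theorem sum_twistedShift :
    ∑ i, twistedShift n u v i = u (v (Fin.last n)) + ∑ i : Fin n, v i.castSucc := by
  simp only [Fin.sum_univ_succ, twistedShift_apply_zero, twistedShift_apply_succ]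

end TwistedShift

section TwistedShiftSubSelf

variable {R M : Type*} [Ring R] [AddCommGroup M] [Module R M] {n : ℕ} (u : M →ₗ[R] M)

theorem sum_twistedShift_sub_self (v : Fin (n + 1) → M) :
    ∑ i, (twistedShift n u v - v) i = u (v (Fin.last n)) - v (Fin.last n) := by
  simp only [Pi.sub_apply, Finset.sum_sub_distrib, sum_twistedShift, Fin.sum_univ_castSucc v]
  abel

theorem twistedShift_sub_partialSum_sub_self {x : M} {w : Fin (n + 1) → M}
    (hx : u x - x = ∑ i, w i) :
    twistedShift n u (fun i ↦ u x - Fin.partialSum w i.succ) -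
      (fun i ↦ u x - Fin.partialSum w i.succ) = w := by
  have last_eq : u x - Fin.partialSum w (Fin.last n).succ = x := by
    rw [Fin.succ_last, partialSum_last, ← hx, sub_sub_cancel]
  have shift_eq (i : Fin (n + 1)) : twistedShift n u (fun i ↦ u x - Fin.partialSum w i.succ) i =
      u x - Fin.partialSum w i.castSucc := by
    cases i using Fin.cases with
    | zero =>
      rw [twistedShift_apply_zero, last_eq, Fin.castSucc_zero, Fin.partialSum_zero, sub_zero]
    | succ i => rw [twistedShift_apply_succ, Fin.succ_castSucc]
  funext i
  rw [Pi.sub_apply, shift_eq, Fin.partialSum_succ]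
  abel

theorem range_twistedShift_sub_id :
    (twistedShift n u - LinearMap.id).range =
      (u - LinearMap.id).range.comap (coordSum R M (Fin (n + 1))) := by
  refine le_antisymm ?_ fun w ⟨x, hx⟩ ↦ ?_
  · rintro _ ⟨v, rfl⟩
    rw [Submodule.mem_comap, coordSum_apply]
    exact ⟨v (Fin.last n), (sum_twistedShift_sub_self u v).symm⟩
  · rw [coordSum_apply] at hx
    exact ⟨_, twistedShift_sub_partialSum_sub_self u hx⟩

end TwistedShiftSubSelf

theorem statement7_general (K : Type*) [Ring K] (V : Type*) [AddCommGroup V] [Module K V]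
    (N : ℕ) (hN : 1 ≤ N) (u : V →ₗ[K] V)
    (f : (Fin N → V) →ₗ[K] (Fin N → V))
    (hf0 : ∀ v : Fin N → V,
      f v ⟨0, hN⟩ = u (v ⟨N - 1, Nat.sub_one_lt_of_lt hN⟩) - v ⟨0, hN⟩)
    (hfi : ∀ (v : Fin N → V) (i : Fin N), 0 < (i : ℕ) →
      f v i = v ⟨(i : ℕ) - 1, lt_of_le_of_lt (Nat.sub_le _ _) i.isLt⟩ - v i) :
    (∀ v : Fin N → V, (∑ i, f v i) ∈ LinearMap.range (u - LinearMap.id)) ∧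
    ∃ e : ((Fin N → V) ⧸ LinearMap.range f) ≃ₗ[K]
        (V ⧸ LinearMap.range (u - LinearMap.id)),
      ∀ v : Fin N → V,
        e (Submodule.Quotient.mk v) = Submodule.Quotient.mk (∑ i, v i) := by
  obtain ⟨n, rfl⟩ := Nat.exists_eq_add_of_le' hN
  have f_eq : f = twistedShift n u - LinearMap.id := by
    refine LinearMap.ext fun v ↦ funext fun i ↦ ?_
    cases i using Fin.cases with
    | zero => exact hf0 v
    | succ i => exact hfi v i.succ i.succ_pos
  have range_eq : f.range = (u - LinearMap.id).range.comap (coordSum K V (Fin (n + 1))) :=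
    f_eq ▸ range_twistedShift_sub_id u
  refine ⟨fun v ↦ ?_, quotEquivOfEqComap range_eq (coordSum_surjective K V _), fun v ↦ ?_⟩
  · have sum_mem := range_eq.le (LinearMap.mem_range_self f v)
    rwa [Submodule.mem_comap, coordSum_apply] at sum_mem
  · rw [quotEquivOfEqComap_mk, coordSum_apply]

/-- Let `u` be a `K`-linear endomorphism of `V`, `N ≥ 1`, and let
`f(v₀, …, v_{N−1}) = (u(v_{N−1}) − v₀, v₀ − v₁, …, v_{N−2} − v_{N−1})`.
Then the summation map `(v₀, …, v_{N−1}) ↦ v₀ + ⋯ + v_{N−1}` sends `Im f` into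
`Im(u − id)` and induces a `K`-module isomorphism `V^N/Im(f) ≃ V/Im(u − id)`. -/
theorem statement7 (K : Type*) [CommRing K] [Algebra ℚ K] (V : Type*) [AddCommGroup V]
    [Module K V] (N : ℕ) (hN : 1 ≤ N) (u : V →ₗ[K] V)
    (f : (Fin N → V) →ₗ[K] (Fin N → V))
    (hf0 : ∀ v : Fin N → V,
      f v ⟨0, hN⟩ = u (v ⟨N - 1, by omega⟩) - v ⟨0, hN⟩)
    (hfi : ∀ (v : Fin N → V) (i : Fin N), 0 < (i : ℕ) →
      f v i = v ⟨(i : ℕ) - 1, lt_of_le_of_lt (Nat.sub_le _ _) i.isLt⟩ - v i) :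
    (∀ v : Fin N → V, (∑ i, f v i) ∈ LinearMap.range (u - LinearMap.id)) ∧
    ∃ e : ((Fin N → V) ⧸ LinearMap.range f) ≃ₗ[K]
        (V ⧸ LinearMap.range (u - LinearMap.id)),
      ∀ v : Fin N → V,
        e (Submodule.Quotient.mk v) = Submodule.Quotient.mk (∑ i, v i) :=
  statement7_general K V N hN u f hf0 hfi
end
end
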